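/- arXiv:0902.3953 — 2 statements merged into one kernel-verified Lean document; each statement's English description precedes it below -/
import Mathlib

section
/- Let q ≥ 3. For every x ∈ I_q with f_q^n(x) ≠ 0 for all n ≥ 0, the digits a_i := ⟨−1/f_q^{i−1}(x)⟩ (i ≥ 1) are nonzero integers, the sequence (a_i)_{i≥1} is an infinite q-regular sequence, and the λ_q-continued fraction [0; a_1, a_2, …] converges to x. Moreover, the map sending x to its digit sequence is a bijection from {x ∈ I_q : f_q^n(x) ≠ 0 for all n ≥ 0} onto the set of all infinite q-regular sequences. -/
open Filter Topology

/-- `λ_q = 2 cos (π/q)`. -/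
noncomputable def lamq (q : ℕ) : ℝ := 2 * Real.cos (Real.pi / q)

/-- `h_q = (q-2)/2` for even `q` and `(q-3)/2` for odd `q`. -/
def hQ (q : ℕ) : ℕ := if Even q then (q - 2) / 2 else (q - 3) / 2

/-- Forbidden blocks for the nearest `λ_q`-multiple continued fractions.
For `ε ∈ {1,-1}`: the block `(ε)^{h_q+1}`; for even `q` the blocks `((ε)^{h_q}, ε·m)`, `m ≥ 1`;
for odd `q` (including `q = 3`, where `h_q = 0`) the blocks `((ε)^{h_q}, ε·2, (ε)^{h_q}, ε·m)`,
`m ≥ 1`. -/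
def IsForbidden (q : ℕ) (L : List ℤ) : Prop :=
  ∃ ε : ℤ, (ε = 1 ∨ ε = -1) ∧
    (L = List.replicate (hQ q + 1) ε ∨
      (if Even q then
        ∃ m : ℤ, 1 ≤ m ∧ L = List.replicate (hQ q) ε ++ [ε * m]
      else
        ∃ m : ℤ, 1 ≤ m ∧
          L = List.replicate (hQ q) ε ++ ε * 2 :: (List.replicate (hQ q) ε ++ [ε * m])))

/-- An infinite sequence is `q`-regular if no finite subblock is forbidden. -/
def RegularSeq (q : ℕ) (a : ℕ → ℤ) : Prop :=
  ∀ (l len : ℕ), ¬ IsForbidden q (List.ofFn fun j : Fin len => a (l + (j : ℕ)))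

/-- An infinite sequence is dual `q`-regular if no reversed finite subblock is forbidden. -/
def DualRegularSeq (q : ℕ) (a : ℕ → ℤ) : Prop :=
  ∀ (l len : ℕ), ¬ IsForbidden q (List.ofFn fun j : Fin len => a (l + (j : ℕ))).reverse

/-- A finite sequence is `q`-regular if no contiguous subblock is forbidden. -/
def RegularList (q : ℕ) (L : List ℤ) : Prop :=
  ∀ B : List ℤ, B <:+: L → ¬ IsForbidden q B

/-- Numerators of the convergents: `p₀ = a₀λ`, `p₁ = a₁λ·p₀ - 1`,
`pₙ = aₙλ·pₙ₋₁ - pₙ₋₂` (so that `p₋₁ = 1`, `p₋₂ = 0`).  Here `A n` is the digit `aₙ`. -/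
noncomputable def cfP (lam : ℝ) (A : ℕ → ℤ) : ℕ → ℝ
  | 0 => (A 0 : ℝ) * lam
  | 1 => (A 1 : ℝ) * lam * ((A 0 : ℝ) * lam) - 1
  | (n + 2) => (A (n + 2) : ℝ) * lam * cfP lam A (n + 1) - cfP lam A n

/-- Denominators of the convergents: `q₀ = 1`, `q₁ = a₁λ`,
`qₙ = aₙλ·qₙ₋₁ - qₙ₋₂` (so that `q₋₁ = 0`, `q₋₂ = -1`). -/
noncomputable def cfQ (lam : ℝ) (A : ℕ → ℤ) : ℕ → ℝ
  | 0 => 1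
  | 1 => (A 1 : ℝ) * lam
  | (n + 2) => (A (n + 2) : ℝ) * lam * cfQ lam A (n + 1) - cfQ lam A n

/-- The λ-continued fraction with digit sequence `A` converges to `x`. -/
def CFConvergesTo (lam : ℝ) (A : ℕ → ℤ) (x : ℝ) : Prop :=
  (∀ n, cfQ lam A n ≠ 0) ∧
    Filter.Tendsto (fun n => cfP lam A n / cfQ lam A n) Filter.atTop (nhds x)

/-- The value `p_L/q_L` of the finite continued fraction `[a₀; a₁, …, a_L]`. -/
noncomputable def cfValList (lam : ℝ) (a0 : ℤ) (L : List ℤ) : ℝ :=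
  cfP lam (fun i => (a0 :: L).getD i 0) L.length /
    cfQ lam (fun i => (a0 :: L).getD i 0) L.length

/-- The last denominator `q_L` of the finite continued fraction `[a₀; a₁, …, a_L]`. -/
noncomputable def cfDenList (lam : ℝ) (a0 : ℤ) (L : List ℤ) : ℝ :=
  cfQ lam (fun i => (a0 :: L).getD i 0) L.length

/-- The modified floor: `⌊t⌋* = ⌈t⌉ - 1` for `t > 0` and `⌊t⌋* = ⌊t⌋` for `t ≤ 0`. -/
noncomputable def floorstar (t : ℝ) : ℤ := if 0 < t then ⌈t⌉ - 1 else ⌊t⌋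

/-- The nearest `λ`-multiple: `⟨y⟩ = ⌊y/λ + 1/2⌋*`. -/
noncomputable def nearestLam (lam : ℝ) (x : ℝ) : ℤ := floorstar (x / lam + 1 / 2)

/-- The interval map `f_q` on `I_q = [-λ/2, λ/2]`. -/
noncomputable def fq (lam : ℝ) (x : ℝ) : ℝ :=
  if x = 0 then 0 else -1 / x - (nearestLam lam (-1 / x) : ℝ) * lam

/-- `R_q`: equal to `1` for even `q`, and the positive root of `R² + (2-λ_q)R = 1` for odd `q`. -/
noncomputable def Rq (q : ℕ) : ℝ :=
  if Even q then 1 else (lamq q - 2 + Real.sqrt ((2 - lamq q) ^ 2 + 4)) / 2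

/-- `r_q = R_q - λ_q`. -/
noncomputable def rq (q : ℕ) : ℝ := Rq q - lamq q

/-- The map `⟨·⟩*` used by the dual algorithm. -/
noncomputable def nearestDual (lam R y : ℝ) : ℤ :=
  if 0 ≤ y then floorstar (y / lam + 1 - R / lam) else floorstar (y / lam + R / lam)

/-- The dual interval map `f_q^*` on `I_{R_q} = [-R_q, R_q]`. -/
noncomputable def fqstar (lam R : ℝ) (x : ℝ) : ℝ :=
  if x = 0 then 0 else -1 / x - (nearestDual lam R (-1 / x) : ℝ) * lam

/-- The matrix `S = [[0,-1],[1,0]]` as an element of `SL(2,ℝ)`. -/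
noncomputable def matS : Matrix.SpecialLinearGroup (Fin 2) ℝ :=
  ⟨!![0, -1; 1, 0], by norm_num [Matrix.det_fin_two_of]⟩

/-- The matrix `T = [[1,λ],[0,1]]` as an element of `SL(2,ℝ)`. -/
noncomputable def matT (lam : ℝ) : Matrix.SpecialLinearGroup (Fin 2) ℝ :=
  ⟨!![1, lam; 0, 1], by norm_num [Matrix.det_fin_two_of]⟩

/-- The Hecke triangle group `G_q`, the subgroup of `SL(2,ℝ)` generated by `S` and `T_q`. -/
noncomputable def Hecke (q : ℕ) : Subgroup (Matrix.SpecialLinearGroup (Fin 2) ℝ) :=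
  Subgroup.closure {matS, matT (lamq q)}

/-- The Möbius action of `g` on `x ∈ ℝ`. -/
noncomputable def moeb (g : Matrix.SpecialLinearGroup (Fin 2) ℝ) (x : ℝ) : ℝ :=
  (g.val 0 0 * x + g.val 0 1) / (g.val 1 0 * x + g.val 1 1)

/-- `x` and `y` are `G_q`-equivalent. -/
def GqEquiv (q : ℕ) (x y : ℝ) : Prop :=
  ∃ g ∈ Hecke q, (g.val 1 0 * x + g.val 1 1 ≠ 0) ∧ moeb g x = y

/-- Two sequences have a common tail. -/
def CommonTail (a b : ℕ → ℤ) : Prop := ∃ m n : ℕ, ∀ k : ℕ, a (m + k) = b (n + k)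

/-- The period block of `ρ_q`: `(3)` for `q = 3`, `((1)^{h_q-1}, 2)` for even `q`
and `((1)^{h_q}, 2, (1)^{h_q-1}, 2)` for odd `q ≥ 5`. -/
def rhoBlock (q : ℕ) : List ℤ :=
  if q = 3 then [3]
  else if Even q then List.replicate (hQ q - 1) 1 ++ [2]
  else List.replicate (hQ q) 1 ++ 2 :: (List.replicate (hQ q - 1) 1 ++ [2])

/-- The periodic sequence `ρ_q`. -/
def rho (q : ℕ) (i : ℕ) : ℤ := (rhoBlock q).getD (i % (rhoBlock q).length) 0

/-- `x` has the infinite regular `λ_q`-CF with digit sequence `A` (with `A 0 = a₀`). -/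
def HasRegCF (q : ℕ) (x : ℝ) (A : ℕ → ℤ) : Prop :=
  (∀ i, A (i + 1) ≠ 0) ∧ RegularSeq q (fun i => A (i + 1)) ∧ CFConvergesTo (lamq q) A x

/-- `x` has the infinite dual regular `λ_q`-CF with digit sequence `A` (with `A 0 = a₀`). -/
def HasDualRegCF (q : ℕ) (x : ℝ) (A : ℕ → ℤ) : Prop :=
  (∀ i, A (i + 1) ≠ 0) ∧ DualRegularSeq q (fun i => A (i + 1)) ∧ CFConvergesTo (lamq q) A x

/-- The digits of `x` produced by the algorithm for `f_q`: `a_{i+1} = ⟨-1 / f_q^i(x)⟩`. -/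
noncomputable def digitSeq (lam : ℝ) (x : ℝ) : ℕ → ℤ :=
  fun i => nearestLam lam (-1 / (fq lam)^[i] x)

/-- The digits of `x` produced by the algorithm for `f_q^*`: `b_{i+1} = ⟨-1 / (f_q^*)^i(x)⟩*`. -/
noncomputable def digitSeqStar (lam R : ℝ) (x : ℝ) : ℕ → ℤ :=
  fun i => nearestDual lam R (-1 / (fqstar lam R)^[i] x)

/-- Data of the critical orbit `w` of `-λ/2`, with digits `c`, reaching `0` after `N` steps. -/
structure Crit (L : ℝ) (N : ℕ) (c : ℕ → ℤ) (w : ℕ → ℝ) : Prop where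
  pos : 0 < L
  lt : L < 2
  cpos : ∀ k, 1 ≤ c k
  w0 : w 0 = -L / 2
  wN : w N = 0
  wneg : ∀ k, k < N → w k < 0
  wgt : ∀ k, 0 < k → k ≤ N → -L / 2 < w k
  recur : ∀ k, k < N → w k * (c k * L + w (k + 1)) = -1

/-- The sequence `b` is not lexicographically below the critical sequence from place `k` on. -/
def CLex (N : ℕ) (c : ℕ → ℤ) (k : ℕ) (b : ℕ → ℤ) : Prop :=
  ∀ d, k + d ≤ N → (∀ j, j < d → b j = c (k + j)) → 1 ≤ b d → k + d < N ∧ c (k + d) ≤ b d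

/-- All tails satisfy the lexicographic condition. -/
def LexAll (N : ℕ) (c : ℕ → ℤ) (a : ℕ → ℤ) : Prop :=
  ∀ i, CLex N c 0 (fun j => a (i + j))

/-- A formal orbit with digits `a`. -/
structure Orb (L : ℝ) (a : ℕ → ℤ) (x : ℕ → ℝ) : Prop where
  mem : ∀ i, x i ∈ Set.Icc (-L / 2) (L / 2)
  rel : ∀ i, x i * (a i * L + x (i + 1)) = -1
  nz : ∀ i, a i ≠ 0

lemma Orb.neg {L : ℝ} {a : ℕ → ℤ} {x : ℕ → ℝ} (h : Orb L a x) :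
    Orb L (fun i => -a i) (fun i => -x i) where
  mem i := by have := h.mem i; constructor <;> [linarith [this.2]; linarith [this.1]]
  rel i := by have := h.rel i; push_cast; linarith
  nz i := by simpa using h.nz i

lemma Orb.shift {L : ℝ} {a : ℕ → ℤ} {x : ℕ → ℝ} (h : Orb L a x) (m : ℕ) :
    Orb L (fun i => a (m + i)) (fun i => x (m + i)) where
  mem _ := h.mem _
  rel i := h.rel (m + i)
  nz _ := h.nz _

section crit
variable {L : ℝ} {N : ℕ} {c : ℕ → ℤ} {w : ℕ → ℝ}

lemma den_pos (hL : 0 < L) {a : ℤ} {y : ℝ} (ha : 1 ≤ a) (hy : -L / 2 ≤ y) :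
    0 < a * L + y := by
  have : (1 : ℝ) ≤ a := by exact_mod_cast ha
  nlinarith

lemma neg_of_rel (hL : 0 < L) {a : ℤ} {x y : ℝ} (ha : 1 ≤ a) (hy : -L / 2 ≤ y)
    (h : x * (a * L + y) = -1) : x < 0 := by
  have := den_pos hL ha hy
  by_contra hx
  push Not at hx
  nlinarith [mul_nonneg hx this.le]

lemma lex_of_orb (C : Crit L N c w) {a : ℕ → ℤ} {x : ℕ → ℝ} (h : Orb L a x) :
    CLex N c 0 a := by
  intro d hd hj h1
  have key : ∀ k, k ≤ d → w k ≤ x k := by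
    intro k
    induction k with
    | zero => intro _; rw [C.w0]; exact (h.mem 0).1
    | succ k ih =>
      intro hk
      have h2 := ih (by omega)
      have h3 := hj k (by omega)
      rw [zero_add] at h3
      have h4 := h.rel k
      have h5 := C.recur k (by omega)
      have h6 := C.cpos k
      have h7 : x k < 0 := neg_of_rel C.pos (by omega : 1 ≤ a k) (h.mem (k+1)).1 h4
      have h8 := C.wneg k (by omega)
      rw [h3] at h4
      by_contra hlt
      push Not at hlt
      have h9 := den_pos C.pos h6 (h.mem (k+1)).1
      nlinarith [mul_pos_of_neg_of_neg h8 (sub_neg.2 hlt), mul_nonneg (sub_nonneg.2 h2) h9.le]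
  have h2 := key d le_rfl
  have h4 := h.rel d
  have h7 : x d < 0 := neg_of_rel C.pos h1 (h.mem (d+1)).1 h4
  have hdN : d < N := by
    rcases lt_or_eq_of_le (show d ≤ N by omega) with h | h
    · exact h
    · rw [h] at h2 h7; rw [C.wN] at h2; linarith
  refine ⟨by omega, ?_⟩
  rw [zero_add]
  have h5 := C.recur d hdN
  have h8 := C.wneg d hdN
  have h9 := C.wgt (d+1) (by omega) (by omega)
  by_contra hlt
  push Not at hlt
  have h10 : (a d : ℝ) + 1 ≤ c d := by exact_mod_cast hlt
  have h11 := (h.mem (d+1)).2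
  have h12 := den_pos C.pos h1 (h.mem (d+1)).1
  have h13 : (a d : ℝ) * L + x (d+1) < c d * L + w (d+1) := by nlinarith [C.pos]
  nlinarith [mul_pos_of_neg_of_neg h8 (sub_neg.2 h13), mul_nonneg (sub_nonneg.2 h2) h12.le]

lemma lexAll_of_orb (C : Crit L N c w) {a : ℕ → ℤ} {x : ℕ → ℝ} (h : Orb L a x) :
    LexAll N c a := fun i => lex_of_orb C (h.shift i)

lemma step (C : Crit L N c w) {a : ℕ → ℤ} (ha : a 0 ≠ 0) {y : ℝ}
    (hy : y ∈ Set.Icc (-L / 2) (L / 2))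
    (H : ∀ k, k ≤ N → CLex N c k (fun j => a (j + 1)) → w k ≤ y) :
    ∀ k, k ≤ N → CLex N c k a → w k ≤ -1 / (a 0 * L + y) := by
  intro k hk hl
  rcases lt_or_gt_of_ne ha with h0 | h0
  · have h1 : (a 0 : ℝ) ≤ -1 := by exact_mod_cast (by omega : a 0 ≤ -1)
    have h2 : (a 0 : ℝ) * L + y < 0 := by nlinarith [C.pos, hy.2]
    have h3 : w k ≤ 0 := by
      rcases lt_or_eq_of_le hk with h | h
      · exact (C.wneg k h).le
      · rw [h, C.wN]
    exact h3.trans (div_nonneg_of_nonpos (by norm_num) h2.le)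
  · obtain ⟨hkN, hc⟩ := hl 0 (by omega) (by intro j hj; omega) (by omega)
    rw [add_zero] at hkN hc
    have h5 := C.recur k hkN
    have h8 := C.wneg k hkN
    have h12 := den_pos C.pos (by omega : 1 ≤ a 0) hy.1
    rw [le_div_iff₀ h12]
    suffices hs : (c k : ℝ) * L + w (k+1) ≤ a 0 * L + y by
      nlinarith [mul_nonneg_of_nonpos_of_nonpos h8.le (sub_nonpos.2 hs)]
    rcases lt_or_eq_of_le hc with h | h
    · have h10 : (c k : ℝ) + 1 ≤ a 0 := by exact_mod_cast h
      have h3 : w (k+1) ≤ 0 := by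
        rcases lt_or_eq_of_le (show k + 1 ≤ N by omega) with h | h
        · exact (C.wneg _ h).le
        · rw [h, C.wN]
      nlinarith [C.pos, hy.1]
    · rw [h]
      have := H (k+1) (by omega) (by
        intro d hd hj h1
        beta_reduce at hj h1
        have := hl (d+1) (by omega) (by
          intro j hj'
          rcases j with _ | j
          · simpa using h.symm
          · rw [hj j (by omega)]; congr 1; omega) h1
        rw [show k + (d + 1) = k + 1 + d by omega] at this
        exact this)
      linarith

lemma trunc_aux (C : Crit L N c w) (n : ℕ) : ∀ (a : ℕ → ℤ), (∀ i, a i ≠ 0) →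
    LexAll N c a → LexAll N c (fun i => -a i) →
    ∃ z : ℕ → ℝ, z n = 0 ∧ (∀ i, i ≤ n → z i ∈ Set.Icc (-L / 2) (L / 2)) ∧
      (∀ i, i < n → z i * (a i * L + z (i + 1)) = -1) ∧
      (∀ k, k ≤ N → CLex N c k a → w k ≤ z 0) ∧
      (∀ k, k ≤ N → CLex N c k (fun i => -a i) → w k ≤ - z 0) := by
  have hw : ∀ k, k ≤ N → w k ≤ 0 := by
    intro k hk
    rcases lt_or_eq_of_le hk with h | h
    · exact (C.wneg k h).le
    · rw [h, C.wN]
  induction n with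
  | zero =>
    intro a _ _ _
    refine ⟨fun _ => 0, rfl, fun i _ => ⟨by linarith [C.pos], by linarith [C.pos]⟩, ?_, ?_, ?_⟩
    · intro i hi; omega
    · intro k hk _; exact hw k hk
    · intro k hk _; simpa using hw k hk
  | succ n ih =>
    intro a ha h1 h2
    obtain ⟨z, hz0, hzm, hzr, hz1, hz2⟩ := ih (fun j => a (j+1)) (fun i => ha _)
      (fun i => by have := h1 (i+1); simpa only [add_right_comm] using this)
      (fun i => by have := h2 (i+1); simpa only [add_right_comm] using this)
    have m0 := hzm 0 (by omega)
    have s1 := step C (ha 0) m0 hz1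
    have s2 := step C (a := fun i => -a i) (by simpa using ha 0) (y := -z 0)
      ⟨by linarith [m0.2], by linarith [m0.1]⟩ hz2
    have e : -1 / (((-a 0 : ℤ) : ℝ) * L + - z 0) = - (-1 / (a 0 * L + z 0)) := by
      rw [show ((-a 0 : ℤ) : ℝ) * L + - z 0 = -(a 0 * L + z 0) by push_cast; ring, div_neg]
    simp only [e] at s2
    have hden : (a 0 : ℝ) * L + z 0 ≠ 0 := by
      rcases lt_or_gt_of_ne (ha 0) with h | h
      · have := den_pos C.pos (a := -a 0) (y := - z 0) (by omega) (by linarith [m0.2])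
        push_cast at this
        intro h; linarith
      · exact (den_pos C.pos (by omega) m0.1).ne'
    refine ⟨fun i => if i = 0 then -1 / (a 0 * L + z 0) else z (i-1), by simpa using hz0,
      ?_, ?_, by simpa using s1, by simpa using s2⟩
    · intro i hi
      rcases i with _ | i
      · have l1 := s1 0 (by omega) (by simpa using h1 0)
        have l2 := s2 0 (by omega) (by simpa using h2 0)
        rw [C.w0] at l1 l2
        simp only [if_true]
        exact ⟨l1, by linarith⟩
      · simpa using hzm i (by omega)
    · intro i hi
      rcases i with _ | i
      · simp only [if_true]
        field_simp
        simp
      · simpa using hzr i (by omega)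

lemma trunc (C : Crit L N c w) {a : ℕ → ℤ} (ha : ∀ i, a i ≠ 0)
    (h1 : LexAll N c a) (h2 : LexAll N c (fun i => -a i)) (n : ℕ) :
    ∃ z : ℕ → ℝ, z n = 0 ∧ (∀ i, i ≤ n → z i ∈ Set.Icc (-L / 2) (L / 2)) ∧
      (∀ i, i < n → z i * (a i * L + z (i + 1)) = -1) := by
  obtain ⟨z, p, q, r, _⟩ := trunc_aux C n a ha h1 h2
  exact ⟨z, p, q, r⟩

lemma exists_orb (C : Crit L N c w) {a : ℕ → ℤ} (ha : ∀ i, a i ≠ 0)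
    (h1 : LexAll N c a) (h2 : LexAll N c (fun i => -a i)) : ∃ x, Orb L a x := by
  let K : ℕ → Set (ℕ → ℝ) := fun n =>
    Set.pi Set.univ (fun _ => Set.Icc (-L / 2) (L / 2)) ∩
      {x | ∀ i, i < n → x i * (a i * L + x (i + 1)) = -1}
  have hclosed : ∀ n, IsClosed {x : ℕ → ℝ | ∀ i, i < n → x i * (a i * L + x (i + 1)) = -1} := by
    intro n
    simp only [Set.ofPred_forall]
    refine isClosed_iInter fun i => isClosed_iInter fun _ => ?_
    exact isClosed_eq (by fun_prop) (by fun_prop)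
  have hcomp : IsCompact (Set.pi Set.univ (fun _ : ℕ => Set.Icc (-L / 2) (L / 2))) :=
    isCompact_univ_pi fun _ => isCompact_Icc
  have hK : ∀ n, IsCompact (K n) := fun n => hcomp.inter_right (hclosed n)
  have hne : (⋂ n, K n).Nonempty := by
    apply IsCompact.nonempty_iInter_of_sequence_nonempty_isCompact_isClosed
    · intro n x hx
      exact ⟨hx.1, fun i hi => hx.2 i (by omega)⟩
    · intro n
      obtain ⟨z, hz, hm, hr⟩ := trunc C ha h1 h2 n
      refine ⟨fun i => if i ≤ n then z i else 0, ?_, ?_⟩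
      · intro i _
        by_cases hi : i ≤ n
        · simpa only [hi, if_true] using hm i hi
        · simp only [hi, if_false]
          exact ⟨by linarith [C.pos], by linarith [C.pos]⟩
      · intro i hi
        have e1 : i ≤ n := by omega
        have e2 : i + 1 ≤ n := by omega
        simpa only [e1, e2, if_true] using hr i hi
    · exact hK 0
    · intro n; exact (hK n).isClosed
  obtain ⟨x, hx⟩ := hne
  rw [Set.mem_iInter] at hx
  exact ⟨x, fun i => (hx 0).1 i trivial, fun i => (hx (i+1)).2 i (by omega), ha⟩

lemma Orb.ne_zero {a : ℕ → ℤ} {x : ℕ → ℝ} (h : Orb L a x) (i : ℕ) : x i ≠ 0 := by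
  intro h0
  have := h.rel i
  rw [h0] at this
  norm_num at this

lemma orb_ne0 (C : Crit L N c w) {a : ℕ → ℤ} {x : ℕ → ℝ} (h : Orb L a x) :
    x 0 ≠ -L / 2 := by
  intro h0
  have key : ∀ k, k ≤ N → x k = w k := by
    intro k
    induction k with
    | zero => intro _; rw [C.w0, h0]
    | succ k ih =>
      intro hk
      have e := ih (by omega)
      have h4 := h.rel k
      have h5 := C.recur k (by omega)
      rw [e, ← h5] at h4
      have h6 := mul_left_cancel₀ (C.wneg k (by omega)).ne h4
      have h7 := C.wgt (k+1) (by omega) hk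
      have h8 : w (k+1) ≤ 0 := by
        rcases lt_or_eq_of_le hk with h | h
        · exact (C.wneg _ h).le
        · rw [h, C.wN]
      have h9 := h.mem (k+1)
      have h10 : (a k : ℝ) < c k + 1 := by
        by_contra hh; push Not at hh; nlinarith [C.pos, h9.1, h9.2]
      have h11 : (c k : ℝ) < a k + 1 := by
        by_contra hh; push Not at hh; nlinarith [C.pos, h9.1, h9.2]
      have h12 : a k < c k + 1 := by exact_mod_cast h10
      have h13 : c k < a k + 1 := by exact_mod_cast h11
      have h14 : a k = c k := by omega
      rw [h14] at h6
      linarith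
  exact h.ne_zero N ((key N le_rfl).trans C.wN)

lemma orb_mem_Ioo (C : Crit L N c w) {a : ℕ → ℤ} {x : ℕ → ℝ} (h : Orb L a x) (i : ℕ) :
    x i ∈ Set.Ioo (-L / 2) (L / 2) := by
  have h1 := orb_ne0 C (h.shift i)
  have h2 := orb_ne0 C (h.neg.shift i)
  simp only [add_zero] at h1 h2
  refine ⟨lt_of_le_of_ne (h.mem i).1 h1.symm, lt_of_le_of_ne (h.mem i).2 ?_⟩
  intro h3
  apply h2
  rw [h3]; ring

/-- The shifted digit sequence. -/
def pre (a : ℕ → ℤ) : ℕ → ℤ := fun n => if n = 0 then 0 else a (n - 1)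

lemma cf_det (a : ℕ → ℤ) (n : ℕ) :
    cfP L (pre a) n * cfQ L (pre a) (n+1) - cfP L (pre a) (n+1) * cfQ L (pre a) n = 1 := by
  induction n with
  | zero => simp [cfP, cfQ, pre]
  | succ n ih => rw [cfP, cfQ]; linarith

lemma cf_val (a : ℕ → ℤ) (z : ℕ → ℝ) (n : ℕ)
    (hr : ∀ i, i < n + 1 → z i * (a i * L + z (i + 1)) = -1) :
    z 0 * (cfQ L (pre a) (n+1) + z (n+1) * cfQ L (pre a) n) =
      cfP L (pre a) (n+1) + z (n+1) * cfP L (pre a) n := by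
  induction n with
  | zero => have := hr 0 (by omega); simp [cfP, cfQ, pre] at *; linarith
  | succ n ih =>
    have h1 := ih fun i hi => hr i (by omega)
    have h2 := hr (n+1) (by omega)
    have h0 : z (n+1) ≠ 0 := by
      intro h; rw [h] at h2; norm_num at h2
    rw [cfP, cfQ]
    have e : pre a (n+2) = a (n+1) := rfl
    rw [e]
    apply mul_left_cancel₀ h0
    linear_combination (-1) * h1 + (z 0 * cfQ L (pre a) (n+1) - cfP L (pre a) (n+1)) * h2

lemma cf_den (hL : 0 < L) (a : ℕ → ℤ) (z : ℕ → ℝ) (n : ℕ)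
    (hm : ∀ i, i ≤ n + 1 → z i ∈ Set.Icc (-L / 2) (L / 2))
    (hr : ∀ i, i < n + 1 → z i * (a i * L + z (i + 1)) = -1) :
    (2 / L) ^ (n+1) ≤ |cfQ L (pre a) (n+1) + z (n+1) * cfQ L (pre a) n| := by
  have hz : ∀ i, i < n + 1 → |z i| ≤ L / 2 ∧ z i ≠ 0 := by
    intro i hi
    have := hm i (by omega)
    refine ⟨abs_le.2 ⟨by linarith [this.1], this.2⟩, ?_⟩
    intro h; have := hr i hi; rw [h] at this; norm_num at this
  have gen : ∀ (u X Y : ℝ), |u| ≤ L / 2 → X = -(u * Y) → 2 / L * |X| ≤ |Y| := by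
    intro u X Y hu hX
    rw [hX, abs_neg, abs_mul, div_mul_eq_mul_div, div_le_iff₀ hL]
    nlinarith [abs_nonneg Y, mul_le_mul_of_nonneg_right hu (abs_nonneg Y)]
  induction n with
  | zero =>
    have h2 := hr 0 (by omega)
    have := gen (z 0) 1 (cfQ L (pre a) 1 + z 1 * cfQ L (pre a) 0) (hz 0 (by omega)).1
      (by simp [cfQ, pre]; linarith)
    simpa using this
  | succ n ih =>
    have h1 := ih (fun i hi => hm i (by omega)) (fun i hi => hr i (by omega))
      (fun i hi => hz i (by omega))
    have h2 := hr (n+1) (by omega)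
    have := gen (z (n+1)) (cfQ L (pre a) (n+1) + z (n+1) * cfQ L (pre a) n)
      (cfQ L (pre a) (n+2) + z (n+2) * cfQ L (pre a) (n+1)) (hz (n+1) (by omega)).1 (by
        rw [cfQ]
        have e : pre a (n+2) = a (n+1) := rfl
        rw [e]
        linear_combination (cfQ L (pre a) (n+1)) * h2)
    rw [pow_succ', ]
    have p : 0 ≤ 2 / L := by positivity
    exact (mul_le_mul_of_nonneg_left h1 p).trans this

lemma orb_converges (C : Crit L N c w) {a : ℕ → ℤ} {x : ℕ → ℝ} (h : Orb L a x) :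
    CFConvergesTo L (pre a) (x 0) := by
  have h1 := lexAll_of_orb C h
  have h2 := lexAll_of_orb C h.neg
  have hQ' : ∀ n, (2 / L) ^ (n+1) ≤ |cfQ L (pre a) (n+1)| := by
    intro n
    obtain ⟨z, hz, hm, hr⟩ := trunc C h.nz h1 h2 (n+1)
    have := cf_den C.pos a z n hm hr
    simpa [hz] using this
  have hpos : ∀ n, 0 < (2 / L) ^ n := fun n => pow_pos (div_pos two_pos C.pos) n
  have hr1 : 1 < 2 / L := by rw [lt_div_iff₀ C.pos]; linarith [C.lt]
  have hne : ∀ n, cfQ L (pre a) (n+1) ≠ 0 := by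
    intro n h0
    have := hQ' n
    rw [h0, abs_zero] at this
    linarith [hpos (n+1)]
  refine ⟨?_, ?_⟩
  · intro n
    rcases n with _ | n
    · simp [cfQ]
    · exact hne n
  · rw [← tendsto_add_atTop_iff_nat 1, tendsto_iff_dist_tendsto_zero]
    have lim : Tendsto (fun n : ℕ => ((2 / L) ^ (n+1))⁻¹) atTop (𝓝 0) :=
      ((tendsto_pow_atTop_atTop_of_one_lt hr1).comp (tendsto_add_atTop_nat 1)).inv_tendsto_atTop
    refine squeeze_zero (fun _ => dist_nonneg) ?_ lim
    intro n
    have hv := cf_val a x n (fun i _ => h.rel i)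
    have hd := cf_den C.pos a x n (fun i _ => h.mem i) (fun i _ => h.rel i)
    have hdet := cf_det (L := L) a n
    set Q1 := cfQ L (pre a) (n+1)
    set Q0 := cfQ L (pre a) n
    set P1 := cfP L (pre a) (n+1)
    set P0 := cfP L (pre a) n
    set D := Q1 + x (n+1) * Q0 with hD
    have hQ1 : Q1 ≠ 0 := hne n
    have hD0 : D ≠ 0 := by
      intro h0; rw [h0, abs_zero] at hd; linarith [hpos (n+1)]
    have e : P1 / Q1 - x 0 = - x (n+1) / (Q1 * D) := by
      field_simp
      rw [mul_comm Q1 (x 0 : ℝ)] 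
      linear_combination (-Q1) * hv - x (n+1) * hdet + P1 * hD
    rw [Real.dist_eq, e, abs_div, abs_mul, abs_neg]
    have hx : |x (n+1)| ≤ 1 := by
      have := h.mem (n+1)
      exact abs_le.2 ⟨by linarith [this.1, C.lt], by linarith [this.2, C.lt]⟩
    have hone : 1 ≤ (2 / L) ^ (n+1) := one_le_pow₀ hr1.le
    have hq := hQ' n
    rw [inv_eq_one_div]
    apply div_le_div₀ zero_le_one hx (hpos _)
    nlinarith [abs_nonneg Q1, abs_nonneg D]

lemma nearest_spec (hL : 0 < L) (hL2 : L < 2) {x : ℝ} (hx : x ∈ Set.Icc (-L / 2) (L / 2))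
    (h0 : x ≠ 0) : nearestLam L (-1 / x) ≠ 0 ∧
      -1 / x - nearestLam L (-1 / x) * L ∈ Set.Icc (-L / 2) (L / 2) := by
  unfold nearestLam
  set t := -1 / x / L + 1 / 2 with ht
  have e : -1 / x = (t - 1 / 2) * L := by rw [ht]; field_simp; ring
  rw [e]
  have hx' := hx
  unfold floorstar
  split_ifs with hpos
  · have a1 := Int.le_ceil t
    have a2 := Int.ceil_lt_add_one t
    refine ⟨?_, ?_⟩
    · intro h
      have : ((⌈t⌉ : ℤ) : ℝ) = 1 := by exact_mod_cast (by omega : ⌈t⌉ = 1)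
      have ht1 : t ≤ 1 := by linarith
      have xneg : x < 0 := by
        by_contra hn
        have : 0 < x := lt_of_le_of_ne (not_lt.1 hn) h0.symm
        have : -1 / x < -1 := by rw [div_lt_iff₀ this]; linarith [hx.2]
        have h5 : -1 / x / L < -1 / 2 := by
          rw [div_lt_iff₀ hL]; nlinarith
        linarith
      have : 1 < -1 / x := by rw [lt_div_iff_of_neg xneg]; linarith [hx.1]
      nlinarith
    · push_cast
      constructor <;> nlinarith
  · have a1 := Int.floor_le t
    have a2 := Int.lt_floor_add_one t
    refine ⟨?_, ?_⟩
    · intro h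
      rw [h] at a1
      push_cast at a1
      have ht1 : t = 0 := by linarith
      rw [ht1] at e
      have xpos : 0 < x := by
        by_contra hn
        have : x < 0 := lt_of_le_of_ne (not_lt.1 hn) h0
        have : 0 < -1 / x := div_pos_of_neg_of_neg (by norm_num) this
        nlinarith
      have : -1 / x < -1 := by rw [div_lt_iff₀ xpos]; linarith [hx.2]
      nlinarith
    · constructor <;> nlinarith

lemma nearest_eq (hL : 0 < L) {a : ℤ} {y : ℝ} (hy : y ∈ Set.Ioo (-L / 2) (L / 2)) :
    nearestLam L (a * L + y) = a := by
  unfold nearestLam floorstar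
  have e : (a * L + y) / L + 1 / 2 = a + (y / L + 1 / 2) := by field_simp; ring
  have h1 : -1 / 2 < y / L := by rw [lt_div_iff₀ hL]; linarith [hy.1]
  have h2 : y / L < 1 / 2 := by rw [div_lt_iff₀ hL]; linarith [hy.2]
  rw [e]
  split_ifs
  · have : ⌈(a : ℝ) + (y / L + 1 / 2)⌉ = a + 1 := by
      rw [Int.ceil_eq_iff]; push_cast; constructor <;> linarith
    omega
  · rw [Int.floor_eq_iff]; constructor <;> linarith

lemma orb_of_fq (hL : 0 < L) (hL2 : L < 2) {x : ℝ} (hx : x ∈ Set.Icc (-L / 2) (L / 2))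
    (h0 : ∀ n : ℕ, (fq L)^[n] x ≠ 0) : Orb L (digitSeq L x) (fun i => (fq L)^[i] x) := by
  have hs : ∀ i, (fq L)^[i+1] x =
      -1 / (fq L)^[i] x - nearestLam L (-1 / (fq L)^[i] x) * L := by
    intro i
    rw [Function.iterate_succ_apply']
    exact if_neg (h0 i)
  have hm : ∀ i, (fq L)^[i] x ∈ Set.Icc (-L / 2) (L / 2) := by
    intro i
    induction i with
    | zero => exact hx
    | succ i ih => rw [hs]; exact (nearest_spec hL hL2 ih (h0 i)).2
  refine ⟨hm, ?_, ?_⟩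
  · intro i
    simp only [hs i, digitSeq]
    have := h0 i
    field_simp
    ring
  · intro i
    exact (nearest_spec hL hL2 (hm i) (h0 i)).1

lemma fq_of_orb (C : Crit L N c w) {a : ℕ → ℤ} {x : ℕ → ℝ} (h : Orb L a x) :
    (∀ i, (fq L)^[i] (x 0) = x i) ∧ digitSeq L (x 0) = a := by
  have e : ∀ i, -1 / x i = a i * L + x (i+1) := by
    intro i
    have := h.rel i
    have h0 := h.ne_zero i
    rw [← this]; field_simp
  have hn : ∀ i, nearestLam L (-1 / x i) = a i := by
    intro i; rw [e]; exact nearest_eq C.pos (orb_mem_Ioo C h _)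
  have hi : ∀ i, (fq L)^[i] (x 0) = x i := by
    intro i
    induction i with
    | zero => rfl
    | succ i ih =>
      rw [Function.iterate_succ_apply', ih]
      unfold fq
      rw [if_neg (h.ne_zero i), hn, e]
      ring
  refine ⟨hi, ?_⟩
  funext i
  unfold digitSeq
  rw [hi, hn]

/-- Main theorem for an abstract critical orbit. -/
lemma main_abs (C : Crit L N c w) (R : (ℕ → ℤ) → Prop)
    (hR : ∀ a, (∀ i, a i ≠ 0) → (R a ↔ LexAll N c a ∧ LexAll N c (fun i => -a i))) :
    (∀ x ∈ {x : ℝ | x ∈ Set.Icc (-L / 2) (L / 2) ∧ ∀ n : ℕ, (fq L)^[n] x ≠ 0},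
      (∀ i, digitSeq L x i ≠ 0) ∧ R (digitSeq L x) ∧
        CFConvergesTo L (pre (digitSeq L x)) x) ∧
    Set.BijOn (digitSeq L)
      {x : ℝ | x ∈ Set.Icc (-L / 2) (L / 2) ∧ ∀ n : ℕ, (fq L)^[n] x ≠ 0}
      {a : ℕ → ℤ | (∀ i, a i ≠ 0) ∧ R a} := by
  have first : ∀ x ∈ {x : ℝ | x ∈ Set.Icc (-L / 2) (L / 2) ∧ ∀ n : ℕ, (fq L)^[n] x ≠ 0},
      (∀ i, digitSeq L x i ≠ 0) ∧ R (digitSeq L x) ∧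
        CFConvergesTo L (pre (digitSeq L x)) x := by
    rintro x ⟨hx, h0⟩
    have o := orb_of_fq C.pos C.lt hx h0
    exact ⟨o.nz, (hR _ o.nz).2 ⟨lexAll_of_orb C o, lexAll_of_orb C o.neg⟩, orb_converges C o⟩
  refine ⟨first, fun x hx => ⟨(first x hx).1, (first x hx).2.1⟩, ?_, ?_⟩
  · intro x hx y hy hxy
    have h1 := (first x hx).2.2.2
    have h2 := (first y hy).2.2.2
    rw [hxy] at h1
    exact tendsto_nhds_unique h1 h2
  · rintro a ⟨ha, hRa⟩
    obtain ⟨l1, l2⟩ := (hR a ha).1 hRa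
    obtain ⟨x, o⟩ := exists_orb C ha l1 l2
    obtain ⟨f1, f2⟩ := fq_of_orb C o
    exact ⟨x 0, ⟨o.mem 0, fun n => by rw [f1]; exact o.ne_zero n⟩, f2⟩

end crit
/-- Length of the critical orbit. -/
def cN (q : ℕ) : ℕ := if Even q then hQ q else 2 * hQ q + 1

/-- Digits of the critical orbit. -/
def cC (q : ℕ) (k : ℕ) : ℤ := if ¬ Even q ∧ k = hQ q then 2 else 1

/-- `sin (t π / q)`. -/
noncomputable def sS (q : ℕ) (t : ℝ) : ℝ := Real.sin (t * (Real.pi / q))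

/-- Index parameter of the critical orbit. -/
noncomputable def cT (q : ℕ) (k : ℕ) : ℝ :=
  if Even q then (hQ q : ℝ) - k else
    if k ≤ hQ q then (hQ q : ℝ) + 1 / 2 - k else 2 * (hQ q : ℝ) + 1 - k

/-- The critical orbit. -/
noncomputable def cW (q : ℕ) (k : ℕ) : ℝ := - sS q (cT q k) / sS q (cT q k + 1)

lemma hQ_even {q : ℕ} (hq : 3 ≤ q) (h : Even q) : q = 2 * hQ q + 2 := by
  obtain ⟨r, hr⟩ := h
  have : Even q := ⟨r, hr⟩
  simp only [hQ, this, if_true]; omega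

lemma hQ_odd {q : ℕ} (hq : 3 ≤ q) (h : ¬ Even q) : q = 2 * hQ q + 3 := by
  have h' := h
  rw [Nat.not_even_iff] at h'
  simp only [hQ, h, if_false]; omega

section trig
variable {q : ℕ}


lemma th_pos (hq : 3 ≤ q) : 0 < Real.pi / q := by
  have : (0 : ℝ) < q := by exact_mod_cast (by omega : 0 < q)
  exact div_pos Real.pi_pos this

lemma q_th (hq : 3 ≤ q) : (q : ℝ) * (Real.pi / q) = Real.pi := by
  have : (q : ℝ) ≠ 0 := by exact_mod_cast (by omega : q ≠ 0)
  field_simp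

lemma th_lt (hq : 3 ≤ q) : Real.pi / q < Real.pi / 2 := by
  have : (2 : ℝ) < q := by exact_mod_cast (by omega : 2 < q)
  exact div_lt_div_of_pos_left Real.pi_pos two_pos this

lemma sS_pos (hq : 3 ≤ q) {t : ℝ} (h0 : 0 < t) (h1 : t < q) : 0 < sS q t := by
  apply Real.sin_pos_of_pos_of_lt_pi
  · exact mul_pos h0 (th_pos hq)
  · have := q_th hq
    nlinarith [th_pos hq]


lemma sS_rec (t : ℝ) : lamq q * sS q t = sS q (t + 1) + sS q (t - 1) := by
  unfold lamq sS
  rw [add_mul, sub_mul, one_mul, Real.sin_add, Real.sin_sub]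
  ring

lemma sS_lt (hq : 3 ≤ q) {t : ℝ} (h0 : 0 ≤ t) (h1 : t + 1 < q / 2) : sS q t / sS q (t + 1) < lamq q / 2 := by
  have hp := sS_pos hq (t := t + 1) (by linarith) (by linarith)
  rw [div_lt_iff₀ hp]
  have e : sS q t = Real.sin ((t + 1) * (Real.pi / q) - Real.pi / q) := by
    unfold sS; congr 1; ring
  rw [e, Real.sin_sub]
  unfold lamq sS
  have hth := th_pos hq
  have hs : 0 < Real.sin (Real.pi / q) :=
    Real.sin_pos_of_pos_of_lt_pi hth (by linarith [th_lt hq, Real.pi_pos])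
  have hc : 0 < Real.cos ((t + 1) * (Real.pi / q)) := by
    apply Real.cos_pos_of_mem_Ioo
    have := q_th hq
    constructor <;> nlinarith [Real.pi_pos]
  nlinarith [mul_pos hs hc]

lemma sS_half (hq : 3 ≤ q) : sS q ((q : ℝ) / 2 - 1) / sS q ((q : ℝ) / 2 - 1 + 1) = lamq q / 2 := by
  have e : sS q ((q : ℝ) / 2 - 1 + 1) = 1 := by
    unfold sS
    rw [show ((q : ℝ) / 2 - 1 + 1) * (Real.pi / q) = q * (Real.pi / q) / 2 by ring, q_th hq,
      Real.sin_pi_div_two]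
  have e2 : sS q ((q : ℝ) / 2 - 1) = Real.cos (Real.pi / q) := by
    unfold sS
    rw [show ((q : ℝ) / 2 - 1) * (Real.pi / q) = q * (Real.pi / q) / 2 - Real.pi / q by ring,
      q_th hq, Real.sin_pi_div_two_sub]
  rw [e, e2]; unfold lamq; ring

lemma crit_inst (hq : 3 ≤ q) : Crit (lamq q) (cN q) (cC q) (cW q) := by
  have hth := th_pos hq
  have hL : 0 < lamq q := by
    unfold lamq
    have := Real.cos_pos_of_mem_Ioo ⟨by linarith [Real.pi_pos], th_lt hq⟩
    linarith
  have hL2 : lamq q < 2 := by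
    unfold lamq
    have := Real.cos_lt_cos_of_nonneg_of_le_pi (le_refl 0)
      (by linarith [th_lt hq, Real.pi_pos]) hth
    rw [Real.cos_zero] at this
    linarith
  -- the shape of the parameters
  have hT0 : cT q 0 = (q : ℝ) / 2 - 1 := by
    unfold cT
    split_ifs with h h'
    · have : (q : ℝ) = 2 * hQ q + 2 := by exact_mod_cast hQ_even hq h
      rw [this]; push_cast; ring
    · have : (q : ℝ) = 2 * hQ q + 3 := by exact_mod_cast hQ_odd hq h
      rw [this]; push_cast; ring
    · omega
  have hTN : cT q (cN q) = 0 := by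
    unfold cT cN
    split_ifs with h h'
    · ring
    · omega
    · push_cast; ring
  have hTpos : ∀ k, k < cN q → 0 < cT q k := by
    intro k hk
    unfold cN at hk
    unfold cT
    split_ifs at hk ⊢ with h h'
    · have : (k : ℝ) < hQ q := by exact_mod_cast hk
      linarith
    · have : (k : ℝ) ≤ hQ q := by exact_mod_cast h'
      linarith
    · have : (k : ℝ) < 2 * hQ q + 1 := by exact_mod_cast hk
      linarith
  have hTlt : ∀ k, 0 < k → cT q k + 1 < (q : ℝ) / 2 := by
    intro k hk
    have hk' : (0 : ℝ) < k := by exact_mod_cast hk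
    unfold cT
    split_ifs with h h'
    · have : (q : ℝ) = 2 * hQ q + 2 := by exact_mod_cast hQ_even hq h
      linarith
    · have : (q : ℝ) = 2 * hQ q + 3 := by exact_mod_cast hQ_odd hq h
      linarith
    · have : (q : ℝ) = 2 * hQ q + 3 := by exact_mod_cast hQ_odd hq h
      have : (hQ q : ℝ) + 1 ≤ k := by exact_mod_cast (by omega : hQ q + 1 ≤ k)
      linarith
  have hTle : ∀ k, cT q k + 1 ≤ (q : ℝ) / 2 := by
    intro k
    rcases Nat.eq_zero_or_pos k with h | h
    · rw [h, hT0]; linarith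
    · exact (hTlt k h).le
  have hq0 : (0 : ℝ) < q := by exact_mod_cast (by omega : 0 < q)
  have hP1 : ∀ k, k ≤ cN q → 0 < sS q (cT q k + 1) := by
    intro k hk
    have h0 : 0 ≤ cT q k := by
      rcases lt_or_eq_of_le hk with h | h
      · exact (hTpos k h).le
      · rw [h, hTN]
    exact sS_pos hq (by linarith) (by linarith [hTle k])
  have hP0 : ∀ k, k < cN q → 0 < sS q (cT q k) := fun k hk =>
    sS_pos hq (hTpos k hk) (by linarith [hTle k])
  refine ⟨hL, hL2, ?_, ?_, ?_, ?_, ?_, ?_⟩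
  · intro k; unfold cC; split_ifs <;> norm_num
  · unfold cW; rw [hT0, neg_div, sS_half hq]; ring
  · unfold cW; rw [hTN]; simp [sS]
  · intro k hk
    unfold cW
    exact div_neg_of_neg_of_pos (by linarith [hP0 k hk]) (hP1 k hk.le)
  · intro k hk hkN
    unfold cW
    have h0 : 0 ≤ cT q k := by
      rcases lt_or_eq_of_le hkN with h | h
      · exact (hTpos k h).le
      · rw [h, hTN]
    have := sS_lt hq h0 (hTlt k hk)
    rw [neg_div (sS q (cT q k + 1))]; linarith
  · intro k hk
    have p1 := hP1 k hk.le
    have p0 := hP0 k hk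
    by_cases hc : ¬ Even q ∧ k = hQ q
    · have hqq : (q : ℝ) = 2 * hQ q + 3 := by exact_mod_cast hQ_odd hq hc.1
      have e1 : cT q k = 1 / 2 := by
        unfold cT; rw [if_neg hc.1, if_pos hc.2.le, hc.2]; ring
      have e2 : cT q (k+1) = (q : ℝ) / 2 - 3 / 2 := by
        unfold cT; rw [if_neg hc.1, if_neg (by omega), hc.2, hqq]; push_cast; ring
      have p2 := hP1 (k+1) (by omega)
      have e3 : cC q k = 2 := by unfold cC; rw [if_pos hc]
      have r1 : sS q (cT q k + 1) = (1 + lamq q) * sS q (cT q k) := by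
        have := sS_rec (q := q) (1/2)
        rw [e1]
        have e4 : sS q (1/2 - 1) = - sS q (1/2) := by
          unfold sS; rw [← Real.sin_neg]; congr 1; ring
        rw [e4] at this; linarith
      have r2 : sS q (cT q (k+1)) = (lamq q - 1) * sS q (cT q (k+1) + 1) := by
        have := sS_rec (q := q) ((q : ℝ) / 2 - 1 / 2)
        rw [e2]
        have e4 : sS q ((q : ℝ) / 2 - 1 / 2 + 1) = sS q ((q : ℝ) / 2 - 1 / 2) := by
          unfold sS; rw [← Real.sin_pi_sub]; congr 1
          linear_combination (-1) * q_th hq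
        rw [e4] at this
        rw [show (q : ℝ) / 2 - 3 / 2 + 1 = (q : ℝ) / 2 - 1 / 2 by ring,
          show (q : ℝ) / 2 - 3 / 2 = (q : ℝ) / 2 - 1 / 2 - 1 by ring]
        linarith
      have f1 : cW q (k+1) = 1 - lamq q := by
        unfold cW; rw [r2]; field_simp; ring
      have f2 : cW q k = -1 / (1 + lamq q) := by
        unfold cW; rw [r1]; field_simp
      rw [f1, f2, e3]
      push_cast
      have : 1 + lamq q ≠ 0 := by linarith
      field_simp
      ring
    · have e3 : cC q k = 1 := by unfold cC; rw [if_neg hc]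
      have e1 : cT q (k+1) = cT q k - 1 := by
        unfold cT
        split_ifs with h h1 h2 h3
        · push_cast; ring
        · push_cast; ring
        · omega
        · exact absurd ⟨h, by omega⟩ hc
        · push_cast; ring
      have := sS_rec (q := q) (cT q k)
      unfold cW
      rw [e3, e1, show cT q k - 1 + 1 = cT q k by ring]
      push_cast
      field_simp
      linarith

end trig

lemma ofFn_eq_iff (b : ℕ → ℤ) (len : ℕ) (M : List ℤ) :
    (List.ofFn fun j : Fin len => b j) = M ↔
      len = M.length ∧ ∀ j, j < len → M[j]? = some (b j) := by
  constructor
  · rintro rfl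
    simp
  · rintro ⟨h1, h2⟩
    apply List.ext_getElem (by simpa using h1)
    intro j hj1 hj2
    have := h2 j (by simpa using hj1)
    rw [List.getElem?_eq_getElem hj2] at this
    simpa using this.symm

lemma reg_iff (q : ℕ) (a : ℕ → ℤ) : RegularSeq q a ↔
    ∀ ε : ℤ, (ε = 1 ∨ ε = -1) → LexAll (cN q) (cC q) (fun i => ε * a i) := by
  have sq : ∀ ε : ℤ, (ε = 1 ∨ ε = -1) → ∀ x y : ℤ, ε * x = y ↔ x = ε * y := by
    rintro ε (rfl | rfl) x y <;> constructor <;> intro h <;> linarith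
  constructor
  · intro hR ε hε i d hd hj h1
    rw [zero_add] at hd
    simp only [zero_add] at hj h1 ⊢
    by_cases hev : Even q
    · have eN : cN q = hQ q := by simp [cN, hev]
      have eC : ∀ k, cC q k = 1 := by intro k; simp [cC, hev]
      rw [eN] at hd ⊢
      simp only [eC] at hj ⊢
      refine ⟨?_, h1⟩
      by_contra hlt
      have hd' : d = hQ q := by omega
      subst hd'
      refine hR i (hQ q + 1) ⟨ε, hε, Or.inr ?_⟩
      rw [if_pos hev]
      refine ⟨ε * a (i + hQ q), h1, ?_⟩
      rw [ofFn_eq_iff (fun j => a (i + j))]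
      refine ⟨by simp, ?_⟩
      intro j hj'
      rcases Nat.lt_succ_iff_lt_or_eq.1 hj' with h | h
      · rw [List.getElem?_append_left (by simpa using h), List.getElem?_replicate_of_lt h]
        have := (sq ε hε _ _).1 (hj j h)
        rw [this, mul_one]
      · subst h
        rw [List.getElem?_append_right (by simp)]
        simp [← (sq ε hε (a (i + hQ q)) _).1 rfl]
    · have eN : cN q = 2 * hQ q + 1 := by simp [cN, hev]
      rw [eN] at hd ⊢
      have hdN : d < 2 * hQ q + 1 := by
        by_contra hlt
        have hd' : d = 2 * hQ q + 1 := by omega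
        subst hd'
        refine hR i (2 * hQ q + 2) ⟨ε, hε, Or.inr ?_⟩
        rw [if_neg hev]
        refine ⟨ε * a (i + (2 * hQ q + 1)), h1, ?_⟩
        rw [ofFn_eq_iff (fun j => a (i + j))]
        refine ⟨by simp; omega, ?_⟩
        intro j hj'
        rcases Nat.lt_succ_iff_lt_or_eq.1 hj' with h | h
        · have hv := (sq ε hε _ _).1 (hj j h)
          rw [hv]
          rcases lt_trichotomy j (hQ q) with h2 | h2 | h2
          · rw [List.getElem?_append_left (by simpa using h2), List.getElem?_replicate_of_lt h2]
            simp [cC, h2.ne]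
          · subst h2
            rw [List.getElem?_append_right (by simp)]
            simp [cC, hev]
          · rw [List.getElem?_append_right (by simp; omega)]
            obtain ⟨r, rfl⟩ : ∃ r, j = hQ q + (r + 1) := ⟨j - hQ q - 1, by omega⟩
            simp only [List.length_replicate, Nat.add_sub_cancel_left, List.getElem?_cons_succ]
            rw [List.getElem?_append_left (by simp; omega), List.getElem?_replicate_of_lt (by omega)]
            simp [cC]
        · subst h
          rw [List.getElem?_append_right (by simp; omega)]
          rw [List.length_replicate, show 2 * hQ q + 1 - hQ q = hQ q + 1 by omega,
            List.getElem?_cons_succ, List.getElem?_append_right (by simp)]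
          simp [← (sq ε hε (a (i + (2 * hQ q + 1))) _).1 rfl]
      refine ⟨hdN, ?_⟩
      by_contra hlt
      push Not at hlt
      have hdh : d = hQ q := by
        by_contra hne
        simp only [cC, hne, and_false, if_false] at hlt
        omega
      subst hdh
      simp only [cC, hev, not_false_eq_true, true_and, if_true] at hlt
      refine hR i (hQ q + 1) ⟨ε, hε, Or.inl ?_⟩
      rw [ofFn_eq_iff (fun j => a (i + j))]
      refine ⟨by simp, ?_⟩
      intro j hj'
      rw [List.getElem?_replicate_of_lt hj']
      rcases Nat.lt_succ_iff_lt_or_eq.1 hj' with h | h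
      · have := (sq ε hε _ _).1 (hj j h)
        rw [this]; simp [cC, h.ne]
      · subst h
        have := (sq ε hε (a (i + hQ q)) 1).1 (by omega)
        rw [this, mul_one]
  · rintro hA l len ⟨ε, hε, hF⟩
    have ee : ε * ε = 1 := by rcases hε with rfl | rfl <;> norm_num
    have hl := hA ε hε l
    rcases hF with hF | hF
    · rw [ofFn_eq_iff (fun j => a (l + j)), List.length_replicate] at hF
      obtain ⟨hlen, hF⟩ := hF
      have hv : ∀ j, j < hQ q + 1 → ε * a (l + j) = 1 := by
        intro j hj
        have := hF j (by omega)
        rw [List.getElem?_replicate_of_lt hj] at this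
        rw [← Option.some.inj this, ee]
      have := hl (hQ q) (by unfold cN; split_ifs <;> omega) (by
        intro j hj
        simp only [hv j (by omega)]
        simp [cC, hj.ne]) (by simp only [hv (hQ q) (by omega)]; exact le_rfl)
      simp only [hv (hQ q) (by omega), zero_add] at this
      by_cases hev : Even q
      · simp [cN, hev] at this
      · simp [cC, hev] at this
    · split_ifs at hF with hev
      · obtain ⟨m, hm, hF⟩ := hF
        rw [ofFn_eq_iff (fun j => a (l + j))] at hF
        obtain ⟨hlen, hF⟩ := hF
        simp only [List.length_append, List.length_replicate, List.length_singleton] at hlen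
        have hv : ∀ j, j < hQ q → ε * a (l + j) = 1 := by
          intro j hj
          have := hF j (by omega)
          rw [List.getElem?_append_left (by simpa using hj), List.getElem?_replicate_of_lt hj] at this
          rw [← Option.some.inj this, ee]
        have hv2 : ε * a (l + hQ q) = m := by
          have := hF (hQ q) (by omega)
          rw [List.getElem?_append_right (by simp)] at this
          simp only [List.length_replicate, Nat.sub_self, List.getElem?_cons_zero] at this
          rw [← Option.some.inj this, ← mul_assoc, ee, one_mul]
        have := hl (hQ q) (by simp [cN, hev]) (by
          intro j hj
          simp only [hv j (by omega)]
          simp [cC, hj.ne]) (by simp only [hv2]; exact hm)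
        simp [cN, hev] at this
      · obtain ⟨m, hm, hF⟩ := hF
        rw [ofFn_eq_iff (fun j => a (l + j))] at hF
        obtain ⟨hlen, hF⟩ := hF
        simp only [List.length_append, List.length_replicate, List.length_cons,
          List.length_nil] at hlen
        have hv : ∀ j, j < 2 * hQ q + 1 → ε * a (l + j) = cC q j := by
          intro j hj
          have := hF j (by omega)
          rcases lt_trichotomy j (hQ q) with h2 | h2 | h2
          · rw [List.getElem?_append_left (by simpa using h2),
              List.getElem?_replicate_of_lt h2] at this
            rw [← Option.some.inj this, ee]
            simp [cC, h2.ne]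
          · subst h2
            rw [List.getElem?_append_right (by simp)] at this
            simp only [List.length_replicate, Nat.sub_self, List.getElem?_cons_zero] at this
            rw [← Option.some.inj this, ← mul_assoc, ee, one_mul]
            simp [cC, hev]
          · rw [List.getElem?_append_right (by simp; omega)] at this
            obtain ⟨r, rfl⟩ : ∃ r, j = hQ q + (r + 1) := ⟨j - hQ q - 1, by omega⟩
            simp only [List.length_replicate, Nat.add_sub_cancel_left,
              List.getElem?_cons_succ] at this
            rw [List.getElem?_append_left (by simp; omega),
              List.getElem?_replicate_of_lt (by omega)] at this
            rw [← Option.some.inj this, ee]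
            simp [cC]
        have hv2 : ε * a (l + (2 * hQ q + 1)) = m := by
          have := hF (2 * hQ q + 1) (by omega)
          rw [List.getElem?_append_right (by simp; omega)] at this
          rw [List.length_replicate, show 2 * hQ q + 1 - hQ q = hQ q + 1 by omega,
            List.getElem?_cons_succ, List.getElem?_append_right (by simp)] at this
          simp only [List.length_replicate, Nat.sub_self, List.getElem?_cons_zero] at this
          rw [← Option.some.inj this, ← mul_assoc, ee, one_mul]
        have := hl (2 * hQ q + 1) (by simp [cN, hev]) (by
          intro j hj
          simp only [hv j (by omega), zero_add]) (by simp only [hv2]; exact hm)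
        simp [cN, hev] at this

/-- The map `f_q` generates the regular `λ_q`-CF's: for every `x ∈ I_q` whose `f_q`-orbit
avoids `0`, the digits `a_i = ⟨-1/f_q^{i-1}(x)⟩` are nonzero, form an infinite `q`-regular
sequence whose continued fraction `[0; a₁, a₂, …]` converges to `x`; and `x ↦ (a_i)` is a
bijection onto the set of infinite `q`-regular sequences. -/
theorem stmt12 (q : ℕ) (hq : 3 ≤ q) :
    (∀ x ∈ {x : ℝ | x ∈ Set.Icc (-(lamq q) / 2) (lamq q / 2) ∧
        ∀ n : ℕ, (fq (lamq q))^[n] x ≠ 0},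
      (∀ i, digitSeq (lamq q) x i ≠ 0) ∧
        RegularSeq q (digitSeq (lamq q) x) ∧
        CFConvergesTo (lamq q) (fun n => if n = 0 then 0 else digitSeq (lamq q) x (n - 1)) x) ∧
    Set.BijOn (digitSeq (lamq q))
      {x : ℝ | x ∈ Set.Icc (-(lamq q) / 2) (lamq q / 2) ∧
        ∀ n : ℕ, (fq (lamq q))^[n] x ≠ 0}
      {a : ℕ → ℤ | (∀ i, a i ≠ 0) ∧ RegularSeq q a} := by
  refine main_abs (crit_inst hq) (RegularSeq q) ?_
  intro a _
  rw [reg_iff]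
  constructor
  · intro h
    exact ⟨by simpa using h 1 (Or.inl rfl), by simpa using h (-1) (Or.inr rfl)⟩
  · rintro ⟨h1, h2⟩ ε (rfl | rfl)
    · simpa using h1
    · simpa using h2
end

section
/- For each integer q ≥ 3 there exists a constant κ > 0 (depending only on q) such that for every a_0 ∈ ℤ and every infinite q-regular sequence (a_i)_{i≥1} with convergents p_n, q_n, the convergents converge to some x ∈ ℝ and |x − p_n/q_n| ≤ 1/(κ·q_n²) holds for all n ≥ 0. -/
open Filter Topology

noncomputable def GG (q : ℕ) (u : ℝ) : ℝ :=
  Real.sin (u * (Real.pi / q)) / Real.sin ((u + 1) * (Real.pi / q))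

lemma sin_pos_aux (q : ℕ) (hq : 3 ≤ q) (u : ℝ) (h0 : 0 < u) (h1 : u < q) :
    0 < Real.sin (u * (Real.pi / q)) := by
  have hq' : (0 : ℝ) < q := by positivity
  apply Real.sin_pos_of_pos_of_lt_pi
  · have := Real.pi_pos
    positivity
  · rw [← mul_div_assoc, div_lt_iff₀ hq', mul_comm]
    exact mul_lt_mul_of_pos_left h1 Real.pi_pos

lemma GG_succ (q : ℕ) (hq : 3 ≤ q) (u : ℝ) (h0 : -1 < u) (h1 : u + 2 < q) :
    GG q (u + 1) * (lamq q - GG q u) = 1 := by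
  have s1 := sin_pos_aux q hq (u + 1) (by linarith) (by linarith)
  have s2 := sin_pos_aux q hq (u + 1 + 1) (by linarith) (by linarith)
  unfold GG lamq
  have key : Real.sin ((u + 1 + 1) * (Real.pi / q)) =
      2 * Real.cos (Real.pi / q) * Real.sin ((u + 1) * (Real.pi / q))
        - Real.sin (u * (Real.pi / q)) := by
    have e1 : (u + 1 + 1) * (Real.pi / q) = (u + 1) * (Real.pi / q) + Real.pi / q := by ring
    have e2 : u * (Real.pi / q) = (u + 1) * (Real.pi / q) - Real.pi / q := by ring
    rw [e1, e2, Real.sin_add, Real.sin_sub]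
    ring
  have h3 : 2 * Real.cos (Real.pi / q) - Real.sin (u * (Real.pi / q)) /
      Real.sin ((u + 1) * (Real.pi / q)) =
      Real.sin ((u + 1 + 1) * (Real.pi / q)) / Real.sin ((u + 1) * (Real.pi / q)) := by
    rw [key, sub_div, mul_div_assoc, div_self s1.ne', mul_one]
  rw [h3, div_mul_div_comm, mul_comm, div_self (mul_pos s2 s1).ne']

lemma GG_diff (q : ℕ) (hq : 3 ≤ q) (u v : ℝ) (h0 : -1 < u) (huv : u ≤ v) (h1 : v + 1 < q) :
    GG q v - GG q u = Real.sin ((v - u) * (Real.pi / q)) * Real.sin (1 * (Real.pi / q)) /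
      (Real.sin ((v + 1) * (Real.pi / q)) * Real.sin ((u + 1) * (Real.pi / q))) := by
  have s1 := sin_pos_aux q hq (u + 1) (by linarith) (by linarith)
  have s2 := sin_pos_aux q hq (v + 1) (by linarith) (by linarith)
  unfold GG
  rw [div_sub_div _ _ s2.ne' s1.ne']
  congr 1
  have e1 : (v + 1) * (Real.pi / q) = v * (Real.pi / q) + Real.pi / q := by ring
  have e2 : (u + 1) * (Real.pi / q) = u * (Real.pi / q) + Real.pi / q := by ring
  have e3 : (v - u) * (Real.pi / q) = v * (Real.pi / q) - u * (Real.pi / q) := by ring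
  rw [e1, e2, e3, one_mul, Real.sin_add, Real.sin_add, Real.sin_sub]
  ring

lemma GG_mono (q : ℕ) (hq : 3 ≤ q) (u v : ℝ) (h0 : -1 < u) (huv : u ≤ v) (h1 : v + 1 < q) :
    GG q u ≤ GG q v := by
  rcases huv.eq_or_lt with rfl | h
  · exact le_rfl
  have := GG_diff q hq u v h0 huv h1
  have s1 := sin_pos_aux q hq (u + 1) (by linarith) (by linarith)
  have s2 := sin_pos_aux q hq (v + 1) (by linarith) (by linarith)
  have s3 := sin_pos_aux q hq (v - u) (by linarith) (by linarith)
  have s4 := sin_pos_aux q hq 1 (by linarith) (by norm_cast; omega)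
  have : 0 < GG q v - GG q u := by rw [this]; positivity
  linarith

lemma GG_lt (q : ℕ) (hq : 3 ≤ q) (u v : ℝ) (h0 : -1 < u) (h : u < v) (h1 : v + 1 < q) :
    GG q u < GG q v := by
  have := GG_diff q hq u v h0 h.le h1
  have s1 := sin_pos_aux q hq (u + 1) (by linarith) (by linarith)
  have s2 := sin_pos_aux q hq (v + 1) (by linarith) (by linarith)
  have s3 := sin_pos_aux q hq (v - u) (by linarith) (by linarith)
  have s4 := sin_pos_aux q hq 1 (by linarith) (by norm_cast; omega)
  have : 0 < GG q v - GG q u := by rw [this]; positivity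
  linarith

lemma GG_zero (q : ℕ) : GG q 0 = 0 := by simp [GG]

lemma GG_neg_half (q : ℕ) (hq : 3 ≤ q) : GG q (-1 / 2) = -1 := by
  have hq' : (3 : ℝ) ≤ q := by exact_mod_cast hq
  have s := sin_pos_aux q hq (1 / 2) (by norm_num) (by linarith)
  unfold GG
  have e : (-1 / 2 : ℝ) * (Real.pi / q) = -(1 / 2 * (Real.pi / q)) := by ring
  have e' : (-1 / 2 + 1 : ℝ) = 1 / 2 := by norm_num
  rw [e, e', Real.sin_neg, neg_div, div_self s.ne']

lemma GG_top (q : ℕ) (hq : 3 ≤ q) : GG q (q / 2 - 1 / 2) = 1 := by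
  have hq' : (3 : ℝ) ≤ q := by exact_mod_cast hq
  have s := sin_pos_aux q hq (q / 2 - 1 / 2 + 1) (by linarith) (by linarith)
  unfold GG
  have e : ((q : ℝ) / 2 - 1 / 2) * (Real.pi / q) =
      Real.pi - (q / 2 - 1 / 2 + 1) * (Real.pi / q) := by
    field_simp
    ring
  rw [e, Real.sin_pi_sub, div_self s.ne']

lemma GG_one (q : ℕ) (hq : 3 ≤ q) : GG q 1 * lamq q = 1 := by
  have hq' : (3 : ℝ) ≤ q := by exact_mod_cast hq
  have := GG_succ q hq 0 (by norm_num) (by linarith)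
  rwa [GG_zero, zero_add, sub_zero] at this

lemma GG_half (q : ℕ) (hq : 3 ≤ q) : GG q (1 / 2) * (lamq q + 1) = 1 := by
  have hq' : (3 : ℝ) ≤ q := by exact_mod_cast hq
  have := GG_succ q hq (-1 / 2) (by norm_num) (by linarith)
  rw [GG_neg_half q hq] at this
  norm_num at this ⊢
  exact this

lemma GG_top' (q : ℕ) (hq : 3 ≤ q) : GG q (q / 2 - 3 / 2) = lamq q - 1 := by
  have hq' : (3 : ℝ) ≤ q := by exact_mod_cast hq
  have := GG_succ q hq (q / 2 - 3 / 2) (by linarith) (by linarith)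
  have e : ((q : ℝ) / 2 - 3 / 2 + 1) = q / 2 - 1 / 2 := by ring
  rw [e, GG_top q hq] at this
  linarith

lemma lam_ge (q : ℕ) (hq : 3 ≤ q) : 1 ≤ lamq q := by
  have hq' : (3 : ℝ) ≤ q := by exact_mod_cast hq
  have h1 := GG_top' q hq
  have h2 := GG_mono q hq 0 (q / 2 - 3 / 2) (by norm_num) (by linarith) (by linarith)
  rw [GG_zero] at h2
  linarith

lemma reg_ones (q : ℕ) (b : ℕ → ℤ) (hb : RegularSeq q b) (ε : ℤ) (hε : ε = 1 ∨ ε = -1)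
    (l : ℕ) (h : ∀ j < hQ q, b (l + j) = ε) : b (l + hQ q) ≠ ε := by
  intro h2
  apply hb l (hQ q + 1)
  refine ⟨ε, hε, Or.inl ?_⟩
  apply List.ext_getElem
  · simp
  · intro j h3 h4
    simp only [List.length_ofFn] at h3
    rw [List.getElem_ofFn, List.getElem_replicate]
    rcases Nat.lt_or_ge j (hQ q) with h5 | h5
    · exact h j h5
    · obtain rfl : j = hQ q := by omega
      exact h2

lemma reg_even (q : ℕ) (b : ℕ → ℤ) (hb : RegularSeq q b) (ε : ℤ) (hε : ε = 1 ∨ ε = -1)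
    (he : Even q) (m : ℤ) (hm : 1 ≤ m)
    (l : ℕ) (h : ∀ j < hQ q, b (l + j) = ε) : b (l + hQ q) ≠ ε * m := by
  intro h2
  apply hb l (hQ q + 1)
  refine ⟨ε, hε, Or.inr ?_⟩
  rw [if_pos he]
  refine ⟨m, hm, ?_⟩
  apply List.ext_getElem
  · simp
  · intro j h3 h4
    simp only [List.length_ofFn] at h3
    rw [List.getElem_ofFn]
    rcases Nat.lt_or_ge j (hQ q) with h5 | h5
    · simp [List.getElem_append, h5, h j h5]
    · obtain rfl : j = hQ q := by omega
      simp [List.getElem_append, h2]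

lemma reg_odd (q : ℕ) (b : ℕ → ℤ) (hb : RegularSeq q b) (ε : ℤ) (hε : ε = 1 ∨ ε = -1)
    (he : ¬ Even q) (m : ℤ) (hm : 1 ≤ m)
    (l : ℕ) (h : ∀ j < hQ q, b (l + j) = ε) (hh : b (l + hQ q) = ε * 2)
    (h' : ∀ j < hQ q, b (l + (hQ q + 1 + j)) = ε) :
    b (l + (hQ q + 1 + hQ q)) ≠ ε * m := by
  intro h2
  apply hb l (hQ q + 1 + hQ q + 1)
  refine ⟨ε, hε, Or.inr ?_⟩
  rw [if_neg he]
  refine ⟨m, hm, ?_⟩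
  apply List.ext_getElem
  · simp
    omega
  · intro j h3 h4
    simp only [List.length_ofFn] at h3
    rw [List.getElem_ofFn]
    rcases lt_trichotomy j (hQ q) with h5 | h5 | h5
    · simp [List.getElem_append, h5, h j h5]
    · subst h5
      simp [List.getElem_append, hh]
    · obtain ⟨i, rfl⟩ : ∃ i, j = hQ q + 1 + i := ⟨j - (hQ q + 1), by omega⟩
      have e : hQ q + 1 + i - hQ q = i + 1 := by omega
      have e2 : ¬ (hQ q + 1 + i < hQ q) := by omega
      rcases Nat.lt_or_ge i (hQ q) with h6 | h6
      · simp [List.getElem_append, e, e2, h6, h' i h6]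
      · obtain rfl : i = hQ q := by omega
        simp [List.getElem_append, e, e2, h2]

/-- Invariant on the ratio `S = q_{i-1}/q_i` after reading `i` digits. -/
def CFInv (q : ℕ) (b : ℕ → ℤ) (i : ℕ) (S : ℝ) : Prop :=
  ∃ ε : ℤ, (ε = 1 ∨ ε = -1) ∧ 0 ≤ (ε : ℝ) * S ∧ ∃ k : ℕ, k ≤ hQ q ∧
    (((∃ l, i = l + k ∧ ∀ j < k, b (l + j) = ε) ∧ (ε : ℝ) * S ≤ GG q (k + 1 / 2)) ∨
     (¬ Even q ∧ (∃ l, i = l + (hQ q + 1 + k) ∧ (∀ j < hQ q, b (l + j) = ε) ∧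
        b (l + hQ q) = ε * 2 ∧ ∀ j < k, b (l + (hQ q + 1 + j)) = ε) ∧
        (ε : ℝ) * S ≤ GG q (k + 1)))

noncomputable def cc (q : ℕ) : ℝ := max (1 / 2) (GG q (q / 2 - 1))

lemma cc_lt (q : ℕ) (hq : 3 ≤ q) : cc q < 1 := by
  have hq' : (3 : ℝ) ≤ q := by exact_mod_cast hq
  unfold cc
  apply max_lt (by norm_num)
  have := GG_lt q hq (q / 2 - 1) (q / 2 - 1 / 2) (by linarith) (by linarith) (by linarith)
  rwa [GG_top q hq] at this

lemma hQ_even_s19 (q : ℕ) (hq : 3 ≤ q) (he : Even q) : (hQ q : ℝ) = q / 2 - 1 := by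
  have h : hQ q = (q - 2) / 2 := by simp [hQ, he]
  obtain ⟨r, hr⟩ := he
  have : hQ q + 1 = r := by omega
  have h1 : (hQ q : ℝ) + 1 = r := by exact_mod_cast this
  have h2 : (q : ℝ) = r + r := by exact_mod_cast hr
  linarith

lemma hQ_odd_s19 (q : ℕ) (hq : 3 ≤ q) (he : ¬ Even q) : (hQ q : ℝ) = q / 2 - 3 / 2 := by
  have h : hQ q = (q - 3) / 2 := by simp [hQ, he]
  obtain ⟨r, hr⟩ := Nat.not_even_iff_odd.1 he
  have : hQ q + 1 = r := by omega
  have h1 : (hQ q : ℝ) + 1 = r := by exact_mod_cast this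
  have h2 : (q : ℝ) = 2 * r + 1 := by exact_mod_cast hr
  linarith

lemma hQ_le (q : ℕ) (hq : 3 ≤ q) : (hQ q : ℝ) ≤ q / 2 - 1 := by
  by_cases he : Even q
  · rw [hQ_even_s19 q hq he]
  · rw [hQ_odd_s19 q hq he]; linarith

set_option maxHeartbeats 2000000 in
lemma inv_step (q : ℕ) (hq : 3 ≤ q) (b : ℕ → ℤ) (hb : RegularSeq q b) (h0 : ∀ i, b i ≠ 0)
    (i : ℕ) (S : ℝ) (hI : CFInv q b i S) :
    1 ≤ |(b i : ℝ) * lamq q - S| ∧ |S| ≤ cc q * |(b i : ℝ) * lamq q - S| ∧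
      CFInv q b (i + 1) (1 / ((b i : ℝ) * lamq q - S)) := by
  have hq' : (3 : ℝ) ≤ q := by exact_mod_cast hq
  have hlam := lam_ge q hq
  have hc1 : 1 / 2 ≤ cc q := le_max_left _ _
  have hc2 : GG q (q / 2 - 1) ≤ cc q := le_max_right _ _
  have g1 := GG_one q hq
  have gh := GG_half q hq
  have g1' : GG q 1 = 1 / lamq q := by rw [eq_div_iff (by positivity)]; exact g1
  have gh' : GG q (1 / 2) = 1 / (lamq q + 1) := by rw [eq_div_iff (by positivity)]; exact gh
  have hle := hQ_le q hq
  obtain ⟨ε, hε, hS0, k, hk, hI⟩ := hI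
  have hkR : (k : ℝ) ≤ hQ q := by exact_mod_cast hk
  obtain ⟨d, hd⟩ : ∃ d : ℤ, b i = ε * d := by
    rcases hε with rfl | rfl
    · exact ⟨b i, by ring⟩
    · exact ⟨- b i, by ring⟩
  have hd0 : d ≠ 0 := by
    rintro rfl
    exact h0 i (by simpa using hd)
  have hεn : -ε = 1 ∨ -ε = -1 := by rcases hε with rfl | rfl <;> simp
  have hεR : (ε : ℝ) * ε = 1 := by rcases hε with rfl | rfl <;> norm_num
  have hεa : |(ε : ℝ)| = 1 := by rcases hε with rfl | rfl <;> norm_num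
  obtain ⟨U, hU⟩ : ∃ U : ℝ, U = ε * S := ⟨_, rfl⟩
  have hSU : S = ε * U := by rw [hU, ← mul_assoc, hεR, one_mul]
  rw [← hU] at hS0 hI
  have hD : (b i : ℝ) * lamq q - S = ε * (d * lamq q - U) := by
    rw [hd, hSU]; push_cast; ring
  have hU1 : U ≤ 1 := by
    rw [← GG_top q hq]
    rcases hI with ⟨-, h⟩ | ⟨he, -, h⟩
    · exact h.trans (GG_mono q hq _ _ (by linarith [Nat.cast_nonneg (α := ℝ) k]) (by linarith) (by linarith))
    · have := hQ_odd_s19 q hq he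
      exact h.trans (GG_mono q hq _ _ (by linarith [Nat.cast_nonneg (α := ℝ) k]) (by linarith) (by linarith))
  have haS : |S| = U := by rw [hSU, abs_mul, hεa, one_mul, abs_of_nonneg hS0]
  have hinvε : (1 : ℝ) / (ε * (d * lamq q - U)) = ε * (1 / (d * lamq q - U)) := by
    rcases hε with rfl | rfl
    · simp
    · rw [Int.cast_neg, Int.cast_one, neg_one_mul, neg_one_mul, one_div_neg_eq_neg_one_div]
  have hk0 : (0 : ℝ) ≤ k := Nat.cast_nonneg k
  rw [haS, hD, abs_mul, hεa, one_mul, hinvε]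
  rcases lt_or_gt_of_ne hd0 with hneg | hpos
  · -- sign change
    have hdR : (d : ℝ) ≤ -1 := by exact_mod_cast (by omega : d ≤ -1)
    have hA : |(d : ℝ) * lamq q - U| = -d * lamq q + U := by
      rw [abs_of_nonpos (by nlinarith)]; ring
    have hge : 1 + U ≤ -(d : ℝ) * lamq q + U := by nlinarith
    rw [hA]
    refine ⟨by linarith, by nlinarith, -ε, hεn, ?_, ?_⟩
    · have : ((-ε : ℤ) : ℝ) * (ε * (1 / (d * lamq q - U))) = 1 / (-d * lamq q + U) := by
        push_cast
        rw [← mul_assoc, neg_mul, hεR, neg_one_mul, one_div, one_div, neg_inv]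
        congr 1; ring
      rw [this]
      apply div_nonneg zero_le_one
      linarith
    · have : ((-ε : ℤ) : ℝ) * (ε * (1 / (d * lamq q - U))) = 1 / (-d * lamq q + U) := by
        push_cast
        rw [← mul_assoc, neg_mul, hεR, neg_one_mul, one_div, one_div, neg_inv]
        congr 1; ring
      rw [this]
      by_cases hd1 : d = -1
      · have hb1 : b i = -ε := by rw [hd, hd1]; ring
        have hpos : 1 ≤ hQ q := by
          by_contra hcon
          have hz : hQ q = 0 := by omega
          have := reg_ones q b hb (-ε) hεn i (by rw [hz]; intro j hj; omega)
          rw [hz] at this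
          exact this hb1
        have hposR : (1 : ℝ) ≤ hQ q := by exact_mod_cast hpos
        refine ⟨1, hpos, Or.inl ⟨⟨i, rfl, ?_⟩, ?_⟩⟩
        · intro j hj
          obtain rfl : j = 0 := by omega
          simpa using hb1
        · have m := GG_mono q hq 1 (((1 : ℕ) : ℝ) + 1 / 2) (by norm_num) (by norm_num)
            (by norm_num; linarith)
          refine le_trans ?_ m
          rw [g1', hd1]
          apply one_div_le_one_div_of_le (by linarith)
          push_cast
          linarith
      · have hdR : (d : ℝ) ≤ -2 := by exact_mod_cast (by omega : d ≤ -2)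
        refine ⟨0, by omega, Or.inl ⟨⟨i + 1, rfl, by intro j hj; omega⟩, ?_⟩⟩
        have e : ((0 : ℕ) : ℝ) + 1 / 2 = 1 / 2 := by norm_num
        rw [e, gh']
        apply one_div_le_one_div_of_le (by linarith)
        nlinarith
  · -- same sign
    have hdR : (1 : ℝ) ≤ d := by exact_mod_cast (by omega : 1 ≤ d)
    have hεS : ∀ x : ℝ, (ε : ℝ) * (ε * x) = x := fun x => by rw [← mul_assoc, hεR, one_mul]
    have hUc : U ≤ GG q (q / 2 - 1) := by
      rcases hI with ⟨⟨l, hl, hl2⟩, h⟩ | ⟨he, ⟨l, hl, h1, h2, h3⟩, h⟩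
      · exact h.trans (GG_mono q hq _ _ (by linarith) (by
          by_cases he : Even q
          · have hlt : k < hQ q := by
              by_contra hcon
              obtain rfl : k = hQ q := by omega
              exact reg_even q b hb ε hε he d (by omega) l hl2 (hl ▸ hd)
            have : (k : ℝ) + 1 ≤ hQ q := by exact_mod_cast hlt
            linarith
          · rw [hQ_odd_s19 q hq he] at hkR
            linarith) (by linarith))
      · have hlt : k < hQ q := by
          by_contra hcon
          obtain rfl : k = hQ q := by omega
          exact reg_odd q b hb ε hε he d (by omega) l h1 h2 h3 (hl ▸ hd)
        have : (k : ℝ) + 1 ≤ hQ q := by exact_mod_cast hlt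
        exact h.trans (GG_mono q hq _ _ (by linarith) (by linarith) (by linarith))
    suffices hs : 1 ≤ d * lamq q - U ∧ CFInv q b (i + 1) (ε * (1 / (d * lamq q - U))) by
      have hA : |(d : ℝ) * lamq q - U| = d * lamq q - U := abs_of_nonneg (by linarith [hs.1])
      rw [hA]
      exact ⟨hs.1, by nlinarith [hs.1], hs.2⟩
    -- helper for the ones case
    have one_aux : ∀ u : ℝ, 0 ≤ u → u + 1 ≤ q / 2 - 1 / 2 → U ≤ GG q u →
        1 ≤ lamq q - U ∧ 1 / (lamq q - U) ≤ GG q (u + 1) := by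
      intro u hu0 hu1 hu
      have hs := GG_succ q hq u (by linarith) (by linarith)
      have hm := GG_mono q hq (u + 1) (q / 2 - 1 / 2) (by linarith) hu1 (by linarith)
      have hm2 := GG_mono q hq u (q / 2 - 3 / 2) (by linarith) (by linarith) (by linarith)
      rw [GG_top q hq] at hm
      rw [GG_top' q hq] at hm2
      have : 1 ≤ lamq q - U := by linarith
      refine ⟨this, ?_⟩
      rw [div_le_iff₀ (by linarith)]
      refine hs.symm.le.trans ?_
      have : 0 ≤ GG q (u + 1) := by
        rw [← GG_zero q]
        exact GG_mono q hq _ _ (by norm_num) (by linarith) (by linarith)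
      exact mul_le_mul_of_nonneg_left (by linarith) this
    by_cases hd1 : d = 1
    · have hb1 : b i = ε := by rw [hd, hd1, mul_one]
      subst hd1
      simp only [Int.cast_one, one_mul]
      rcases hI with ⟨⟨l, hl, hl2⟩, h⟩ | ⟨he, ⟨l, hl, h1, h2, h3⟩, h⟩
      · have hlt : k < hQ q := by
          by_contra hcon
          obtain rfl : k = hQ q := by omega
          exact reg_ones q b hb ε hε l hl2 (hl ▸ hb1)
        have hltR : (k : ℝ) + 1 ≤ hQ q := by exact_mod_cast hlt
        obtain ⟨o1, o2⟩ := one_aux (k + 1 / 2) (by linarith) (by linarith) h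
        refine ⟨o1, ε, hε, ?_, k + 1, hlt, Or.inl ⟨⟨l, by omega, ?_⟩, ?_⟩⟩
        · rw [hεS]; apply div_nonneg zero_le_one; linarith
        · intro j hj
          rcases Nat.lt_or_ge j k with h5 | h5
          · exact hl2 j h5
          · obtain rfl : j = k := by omega
            exact hl ▸ hb1
        · rw [hεS]
          have e : (((k + 1 : ℕ) : ℝ) + 1 / 2) = k + 1 / 2 + 1 := by push_cast; ring
          rw [e]; exact o2
      · have hlt : k < hQ q := by
          by_contra hcon
          obtain rfl : k = hQ q := by omega
          exact reg_odd q b hb ε hε he 1 le_rfl l h1 h2 h3 (hl ▸ hd)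
        have hltR : (k : ℝ) + 1 ≤ hQ q := by exact_mod_cast hlt
        have := hQ_odd_s19 q hq he
        obtain ⟨o1, o2⟩ := one_aux (k + 1) (by linarith) (by linarith) h
        refine ⟨o1, ε, hε, ?_, k + 1, hlt, Or.inr ⟨he, ⟨l, by omega, h1, h2, ?_⟩, ?_⟩⟩
        · rw [hεS]; apply div_nonneg zero_le_one; linarith
        · intro j hj
          rcases Nat.lt_or_ge j k with h5 | h5
          · exact h3 j h5
          · obtain rfl : j = k := by omega
            exact hl ▸ hb1
        · rw [hεS]
          have e : (((k + 1 : ℕ) : ℝ) + 1) = k + 1 + 1 := by push_cast; ring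
          rw [e]; exact o2
    · have hdR : (2 : ℝ) ≤ d := by exact_mod_cast (by omega : 2 ≤ d)
      have hDge : 1 ≤ (d : ℝ) * lamq q - U := by nlinarith
      -- normal target
      have norm_t : lamq q + 1 ≤ d * lamq q - U →
          CFInv q b (i + 1) (ε * (1 / (d * lamq q - U))) := by
        intro h
        refine ⟨ε, hε, ?_, 0, by omega, Or.inl ⟨⟨i + 1, rfl, by intro j hj; omega⟩, ?_⟩⟩
        · rw [hεS]; apply div_nonneg zero_le_one; linarith
        · have e : ((0 : ℕ) : ℝ) + 1 / 2 = 1 / 2 := by norm_num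
          rw [hεS, e, gh']
          exact one_div_le_one_div_of_le (by linarith) h
      refine ⟨hDge, ?_⟩
      by_cases hUl : U ≤ lamq q - 1
      · exact norm_t (by nlinarith)
      by_cases hd3 : 3 ≤ d
      · have hdR : (3 : ℝ) ≤ d := by exact_mod_cast hd3
        exact norm_t (by nlinarith)
      obtain rfl : d = 2 := by omega
      rw [← GG_top' q hq] at hUl
      rcases hI with ⟨⟨l, hl, hl2⟩, h⟩ | ⟨he, ⟨l, hl, h1, h2, h3⟩, h⟩
      · have hkh : k = hQ q := by
          by_contra hcon
          have hltR : (k : ℝ) + 1 ≤ hQ q := by exact_mod_cast (by omega : k + 1 ≤ hQ q)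
          exact hUl (h.trans (GG_mono q hq _ _ (by linarith) (by linarith) (by linarith)))
        subst hkh
        have he : ¬ Even q := fun he =>
          reg_even q b hb ε hε he 2 (by omega) l hl2 (hl ▸ hd)
        refine ⟨ε, hε, ?_, 0, by omega, Or.inr ⟨he, ⟨l, by omega, hl2, hl ▸ hd,
          by intro j hj; omega⟩, ?_⟩⟩
        · rw [hεS]; apply div_nonneg zero_le_one; linarith
        · have e : ((0 : ℕ) : ℝ) + 1 = 1 := by norm_num
          rw [hεS, e, g1']
          apply one_div_le_one_div_of_le (by linarith)
          push_cast
          linarith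
      · exfalso
        have hlt : k < hQ q := by
          by_contra hcon
          obtain rfl : k = hQ q := by omega
          exact reg_odd q b hb ε hε he 2 (by omega) l h1 h2 h3 (hl ▸ hd)
        have hltR : (k : ℝ) + 1 ≤ hQ q := by exact_mod_cast hlt
        have := hQ_odd_s19 q hq he
        exact hUl (h.trans (GG_mono q hq _ _ (by linarith) (by linarith) (by linarith)))

/-- Ratios `q_{n-1}/q_n`. -/
noncomputable def ratS (lam : ℝ) (A : ℕ → ℤ) : ℕ → ℝ
  | 0 => 0
  | (n + 1) => 1 / ((A (n + 1) : ℝ) * lam - ratS lam A n)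

lemma ratS_inv (q : ℕ) (hq : 3 ≤ q) (A : ℕ → ℤ) (h0 : ∀ i, A (i + 1) ≠ 0)
    (hr : RegularSeq q (fun i => A (i + 1))) (n : ℕ) :
    CFInv q (fun i => A (i + 1)) n (ratS (lamq q) A n) := by
  induction n with
  | zero =>
    refine ⟨1, Or.inl rfl, by simp [ratS], 0, by omega,
      Or.inl ⟨⟨0, rfl, by intro j hj; omega⟩, ?_⟩⟩
    have hq' : (3 : ℝ) ≤ q := by exact_mod_cast hq
    have := GG_mono q hq 0 (((0 : ℕ) : ℝ) + 1 / 2) (by norm_num) (by norm_num)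
      (by norm_num; linarith)
    rw [GG_zero] at this
    simpa [ratS] using this
  | succ n ih => exact (inv_step q hq _ hr h0 n _ ih).2.2

lemma cfQ_step (q : ℕ) (hq : 3 ≤ q) (A : ℕ → ℤ) (h0 : ∀ i, A (i + 1) ≠ 0)
    (hr : RegularSeq q (fun i => A (i + 1))) (n : ℕ) :
    cfQ (lamq q) A n ≠ 0 ∧
    cfQ (lamq q) A (n + 1) =
      ((A (n + 1) : ℝ) * lamq q - ratS (lamq q) A n) * cfQ (lamq q) A n := by
  induction n with
  | zero => simp [cfQ, ratS]
  | succ n ih =>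
    have h1 := (inv_step q hq _ hr h0 n _ (ratS_inv q hq A h0 hr n)).1
    have hne : (A (n + 1) : ℝ) * lamq q - ratS (lamq q) A n ≠ 0 := by
      intro h
      simp only [h] at h1
      norm_num at h1
    refine ⟨by rw [ih.2]; exact mul_ne_zero hne ih.1, ?_⟩
    have e : cfQ (lamq q) A n = ratS (lamq q) A (n + 1) * cfQ (lamq q) A (n + 1) := by
      rw [ih.2, ratS, ← mul_assoc, one_div_mul_cancel hne, one_mul]
    rw [cfQ, sub_mul, ← e]

lemma det_aux (lam : ℝ) (A : ℕ → ℤ) (n : ℕ) :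
    cfP lam A (n + 1) * cfQ lam A n - cfP lam A n * cfQ lam A (n + 1) = -1 := by
  induction n with
  | zero => simp [cfP, cfQ]; ring
  | succ n ih =>
    rw [cfP, cfQ]
    linarith

lemma conv_aux (x V : ℕ → ℝ) (hV : ∀ n, 0 ≤ V n) (h : ∀ n, |x (n + 1) - x n| ≤ V n - V (n + 1)) :
    ∃ y, Tendsto x atTop (𝓝 y) ∧ ∀ n, |y - x n| ≤ V n := by
  have a1 : Antitone (fun n => x n + V n) :=
    antitone_nat_of_succ_le fun n => by linarith [(abs_le.1 (h n)).2]
  have a2 : Monotone (fun n => x n - V n) :=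
    monotone_nat_of_le_succ fun n => by linarith [(abs_le.1 (h n)).1]
  have a3 : Antitone V :=
    antitone_nat_of_succ_le fun n => by linarith [abs_nonneg (x (n + 1) - x n), h n]
  have t1 := tendsto_atTop_ciInf a1 ⟨x 0 - V 0, by
    rintro _ ⟨n, rfl⟩
    have := a2 (Nat.zero_le n)
    have := hV n
    simp only at *
    linarith⟩
  have t3 := tendsto_atTop_ciInf a3 ⟨0, by rintro _ ⟨n, rfl⟩; exact hV n⟩
  have t := t1.sub t3
  simp only [add_sub_cancel_right] at t
  refine ⟨_, t, fun n => ?_⟩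
  rw [abs_le]
  constructor
  · have := ge_of_tendsto t (b := x n - V n) (by
      filter_upwards [eventually_ge_atTop n] with m hm
      have := a2 hm
      have := hV m
      simp only at *
      linarith)
    linarith
  · have := le_of_tendsto t (b := x n + V n) (by
      filter_upwards [eventually_ge_atTop n] with m hm
      have := a1 hm
      have := hV m
      simp only at *
      linarith)
    linarith

/-- Approximation quality: for each `q ≥ 3` there is `κ > 0` such that for every infinite
regular `λ_q`-CF with value `x`, `|x - p_n/q_n| ≤ 1/(κ·q_n²)` holds for all `n`. -/
theorem stmt19 (q : ℕ) (hq : 3 ≤ q) :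
    ∃ κ : ℝ, 0 < κ ∧
      ∀ A : ℕ → ℤ, (∀ i, A (i + 1) ≠ 0) → RegularSeq q (fun i => A (i + 1)) →
        ∃ x : ℝ, CFConvergesTo (lamq q) A x ∧
          ∀ n, |x - cfP (lamq q) A n / cfQ (lamq q) A n| ≤
            1 / (κ * (cfQ (lamq q) A n) ^ 2) := by
  have hc1 := cc_lt q hq
  have hc0 : 1 / 2 ≤ cc q := le_max_left _ _
  refine ⟨(1 - cc q) / 2, by linarith, ?_⟩
  intro A h0 hr
  have hstep := fun n => inv_step q hq _ hr h0 n _ (ratS_inv q hq A h0 hr n)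
  have hQ := cfQ_step q hq A h0 hr
  set Q := cfQ (lamq q) A with hQdef
  set P := cfP (lamq q) A with hPdef
  have hm : ∀ n, |Q n| ≤ |Q (n + 1)| := by
    intro n
    rw [(hQ n).2, abs_mul]
    nlinarith [(hstep n).1, abs_nonneg (Q n)]
  have hc : ∀ n, |Q n| ≤ cc q * |Q (n + 2)| := by
    intro n
    have hne : (A (n + 1) : ℝ) * lamq q - ratS (lamq q) A n ≠ 0 := by
      intro h
      have := (hstep n).1
      rw [h] at this
      norm_num at this
    have e : Q n = ratS (lamq q) A (n + 1) * Q (n + 1) := by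
      rw [(hQ n).2, ratS, ← mul_assoc, one_div_mul_cancel hne, one_mul]
    have e2 : Q (n + 2) = _ := (hQ (n + 1)).2
    rw [e, e2, abs_mul, abs_mul, ← mul_assoc]
    exact mul_le_mul_of_nonneg_right (hstep (n + 1)).2.1 (abs_nonneg _)
  have hp : ∀ n, 0 < |Q n| := fun n => abs_pos.2 (hQ n).1
  let e : ℕ → ℝ := fun n => 1 / (Q n) ^ 2
  have he0 : ∀ n, 0 < e n := fun n => by
    have := (hQ n).1
    simp only [e]; positivity
  have he1 : ∀ n, e (n + 1) ≤ e n := by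
    intro n
    simp only [e]
    rw [← sq_abs (Q n), ← sq_abs (Q (n + 1))]
    have := hp n
    have := hm n
    apply one_div_le_one_div_of_le (by positivity)
    gcongr
  have he2 : ∀ n, e (n + 2) ≤ cc q * e n := by
    intro n
    simp only [e]
    rw [← sq_abs (Q n), ← sq_abs (Q (n + 2))]
    have h1 := hp n
    have h2 := hp (n + 2)
    have h3 := hc n
    have h4 := (hm n).trans (hm (n + 1))
    rw [mul_one_div, div_le_div_iff₀ (by positivity) (by positivity), one_mul, sq, sq, ← mul_assoc]
    exact mul_le_mul h3 h4 h1.le (by positivity)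
  have hdiff : ∀ n, |P (n + 1) / Q (n + 1) - P n / Q n| ≤ e n := by
    intro n
    have h1 := (hQ n).1
    have h2 := (hQ (n + 1)).1
    have hd := det_aux (lamq q) A n
    have : P (n + 1) / Q (n + 1) - P n / Q n = -1 / (Q (n + 1) * Q n) := by
      rw [div_sub_div _ _ h2 h1, ← hd]
      congr 1
      ring
    rw [this, abs_div, abs_neg, abs_one, abs_mul]
    simp only [e]
    rw [← sq_abs (Q n), sq]
    have := hp n
    exact one_div_le_one_div_of_le (by positivity)
      (mul_le_mul_of_nonneg_right (hm n) (abs_nonneg _))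
  have h1c : 0 < 1 - cc q := by linarith
  obtain ⟨x, hx, hxn⟩ := conv_aux (fun n => P n / Q n) (fun n => (e n + e (n + 1)) / (1 - cc q))
    (fun n => by have := he0 n; have := he0 (n + 1); positivity)
    (fun n => by
      refine (hdiff n).trans ?_
      rw [← sub_div, le_div_iff₀ h1c]
      linarith [he2 n])
  refine ⟨x, ⟨fun n => (hQ n).1, hx⟩, fun n => (hxn n).trans ?_⟩
  have e3 : 1 / ((1 - cc q) / 2 * Q n ^ 2) = (e n + e n) / (1 - cc q) := by
    have := (hQ n).1
    simp only [e]
    field_simp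
    ring
  rw [e3]
  have := he1 n
  gcongr
end
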